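/- Let L/K be a finite Galois field extension of degree n with Galois group G = {σ₁, ..., σₙ}, let H₀ = ker(Tr_{L/K}), let b₂, ..., bₙ be a K-basis of H₀, and let E₁ be the (n−1) × (n−1) matrix with (i,j) entry σⱼ(bᵢ) for 2 ≤ i, j ≤ n. If K has characteristic different from 2 and G has a cyclic Sylow 2-subgroup of order at least 2, then det E₁ = μα, where μ ∈ K, α ∈ L satisfies α² ∈ K, and K(α) is the unique quadratic extension of K contained in L. -/

import Mathlib

theorem aux_index_two_le {G : Type*} [Group G] [Finite G] (P : Sylow 2 G) [IsCyclic P]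
    (M N : Subgroup G) (hM : M.index = 2) (hN : N.index = 2) : M = N := by
  classical
  haveI : Fact (Nat.Prime 2) := ⟨Nat.prime_two⟩
  obtain ⟨g, hg⟩ := IsCyclic.exists_generator (α := P)
  have hgen : ∀ H : Subgroup G, (g : G) ∈ H → (P : Subgroup G) ≤ H := by
    intro H hH x hx
    obtain ⟨k, hk⟩ := Subgroup.mem_zpowers_iff.1 (hg ⟨x, hx⟩)
    have : (g : G) ^ k = x := by simpa using congrArg Subtype.val hk
    exact this ▸ H.zpow_mem hH k
  have hodd : ∀ H : Subgroup G, (g : G) ∈ H → ¬ 2 ∣ H.index := by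
    intro H hH h2
    exact P.not_dvd_index (h2.trans (Subgroup.index_dvd_of_le (hgen H hH)))
  have hgM : (g : G) ∉ M := fun h => hodd M h (by rw [hM])
  have hgN : (g : G) ∉ N := fun h => hodd N h (by rw [hN])
  let D : Subgroup G :=
    { carrier := {x | x ∈ M ↔ x ∈ N}
      mul_mem' := by
        intro a b ha hb
        simp only [Set.mem_setOf_eq] at *
        rw [Subgroup.mul_mem_iff_of_index_two hM, Subgroup.mul_mem_iff_of_index_two hN, ha, hb]
      one_mem' := by simp [one_mem]
      inv_mem' := by
        intro a ha
        simpa using ha }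
  have hMn := Subgroup.normal_of_index_eq_two hM
  have hNn := Subgroup.normal_of_index_eq_two hN
  have hD : ∀ x, x ∈ D ↔ (x ∈ M ↔ x ∈ N) := fun x => Iff.rfl
  have hDn : D.Normal := by
    refine ⟨fun a ha x => ?_⟩
    rw [hD] at *
    have h1 : x * a * x⁻¹ ∈ M ↔ a ∈ M :=
      ⟨fun h => by simpa [mul_assoc] using hMn.conj_mem _ h x⁻¹, fun h => hMn.conj_mem _ h x⟩
    have h2 : x * a * x⁻¹ ∈ N ↔ a ∈ N :=
      ⟨fun h => by simpa [mul_assoc] using hNn.conj_mem _ h x⁻¹, fun h => hNn.conj_mem _ h x⟩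
    rw [h1, h2, ha]
  have hDodd := hodd D ((hD _).2 (by simp [hgM, hgN]))
  ext x
  rw [← hD]
  have h1 : x ^ D.index ∈ D := Subgroup.pow_index_mem D x
  have h2 : x ^ 2 ∈ D := by
    rw [hD]
    simp [Subgroup.sq_mem_of_index_two hM, Subgroup.sq_mem_of_index_two hN]
  obtain ⟨k, hk⟩ : Odd D.index := by
    rw [← Nat.not_even_iff_odd, even_iff_two_dvd]; exact hDodd
  rw [hk, pow_succ, pow_mul] at h1
  exact (Subgroup.mul_mem_cancel_left D (D.pow_mem h2 k)).1 h1

theorem aux_sign_gen {C : Type*} [Group C] [Fintype C] [DecidableEq C] (g : C)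
    (hg : ∀ x, x ∈ Subgroup.zpowers g) (h2 : Even (Fintype.card C)) :
    Equiv.Perm.sign (Equiv.mulLeft g) = -1 := by
  have hg1 : g ≠ 1 := by
    rintro rfl
    have : Fintype.card C = 1 := by
      rw [Fintype.card_eq_one_iff]
      exact ⟨1, fun x => by simpa using hg x⟩
    rw [this] at h2
    exact absurd h2 (by decide)
  have hc : Equiv.Perm.IsCycle (Equiv.mulLeft g) := by
    refine ⟨1, by simpa using hg1, fun y _ => ?_⟩
    obtain ⟨k, hk⟩ := Subgroup.mem_zpowers_iff.1 (hg y)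
    refine ⟨k, ?_⟩
    rw [Equiv.zpow_mulLeft]
    simpa using hk
  have hs : (Equiv.mulLeft g).support = Finset.univ := by
    ext x
    simp [hg1]
  rw [hc.sign, hs, Finset.card_univ, h2.neg_one_pow]

theorem aux_sign {G : Type*} [Group G] [Fintype G] [DecidableEq G] (P : Sylow 2 G) [IsCyclic P]
    (hP : 2 ≤ Nat.card P) : ∃ g : G, Equiv.Perm.sign (Equiv.mulLeft g) = -1 := by
  classical
  haveI : Fact (Nat.Prime 2) := ⟨Nat.prime_two⟩
  obtain ⟨g, hg⟩ := IsCyclic.exists_generator (α := P)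
  refine ⟨g, ?_⟩
  let H : Subgroup G := P
  have heven : Even (Fintype.card P) := by
    obtain ⟨k, hk⟩ := IsPGroup.iff_card.1 P.2
    have hk' : Nat.card P = 2 ^ k := hk
    rw [← Nat.card_eq_fintype_card, hk']
    rcases k with _ | k
    · rw [hk'] at hP; norm_num at hP
    · exact ⟨2 ^ k, by ring⟩
  have hodd : Odd (Fintype.card (G ⧸ H)) := by
    rw [← Nat.not_even_iff_odd, even_iff_two_dvd, ← Nat.card_eq_fintype_card]
    exact P.not_dvd_index
  let φ : (G ⧸ H) × P → G := fun x => (x.2 : G) * (x.1.out)⁻¹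
  have hφ : Function.Bijective φ := by
    constructor
    · rintro ⟨q, p⟩ ⟨q', p'⟩ h
      simp only [φ] at h
      have hq : q = q' := by
        rw [← QuotientGroup.out_eq' q, ← QuotientGroup.out_eq' q', QuotientGroup.eq]
        have : (q.out)⁻¹ * q'.out = (p : G)⁻¹ * p' := by
          rw [show (p' : G) = p * (q.out)⁻¹ * q'.out by rw [h]; group]
          group
        rw [this]
        exact H.mul_mem (H.inv_mem p.2) p'.2
      subst hq
      simpa using h
    · intro x
      have : (x⁻¹)⁻¹ * (QuotientGroup.mk x⁻¹ : G ⧸ H).out ∈ H := by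
        rw [← QuotientGroup.eq, QuotientGroup.out_eq']
      exact ⟨(QuotientGroup.mk x⁻¹, ⟨_, this⟩), by simp [φ]⟩
  rw [← Equiv.Perm.sign_eq_sign_of_equiv
    (Equiv.prodCongrRight fun _ : G ⧸ H => Equiv.mulLeft g) (Equiv.mulLeft (g : G))
    (Equiv.ofBijective φ hφ) (by rintro ⟨q, p⟩; simp [φ, mul_assoc]),
    Equiv.Perm.sign_prodCongrRight, Finset.prod_const, aux_sign_gen g hg heven, Finset.card_univ,
    hodd.neg_one_pow]

/-- With b₂, ..., bₙ a K-basis of H₀ = ker Tr and E₁ the (n-1) × (n-1) matrix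
with (i,j) entry σⱼ(bᵢ): if char K ≠ 2 and G = Gal(L/K) has a cyclic Sylow
2-subgroup of order at least 2, then det E₁ = μ·α with μ ∈ K, α² ∈ K, and K(α)
the unique quadratic extension of K contained in L.
(Here the degree is n + 1 and the bᵢ are indexed by Fin n.) -/
theorem stmt14 (K L : Type*) [Field K] [Field L] [Algebra K L]
    [FiniteDimensional K L] [IsGalois K L]
    (n : ℕ) (hn : Module.finrank K L = n + 1)
    (σ : Fin (n + 1) ≃ (L ≃ₐ[K] L)) (b : Fin n → L)
    (hb_ind : LinearIndependent K b)
    (hb_span : Submodule.span K (Set.range b) = LinearMap.ker (Algebra.trace K L))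
    (hchar : ringChar K ≠ 2)
    (hsylow : ∃ P : Sylow 2 (L ≃ₐ[K] L), IsCyclic P ∧ 2 ≤ Nat.card P) :
    ∃ (μ : K) (α : L),
      (Matrix.of fun i j : Fin n => σ j.succ (b i)).det = algebraMap K L μ * α ∧
      α ^ 2 ∈ (algebraMap K L).range ∧
      Module.finrank K (IntermediateField.adjoin K {α}) = 2 ∧
      ∀ F : IntermediateField K L, Module.finrank K F = 2 →
        F = IntermediateField.adjoin K {α} := by
  classical
  obtain ⟨P, hPc, hP2⟩ := hsylow
  obtain ⟨x, hx⟩ := Algebra.trace_surjective K L 1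
  let c : Fin (n + 1) → L := Fin.cons x b
  have hc_ind : LinearIndependent K c := by
    rw [linearIndependent_finCons]
    refine ⟨hb_ind, ?_⟩
    rw [hb_span, LinearMap.mem_ker, hx]
    exact one_ne_zero
  let B := basisOfLinearIndependentOfCardEqFinrank hc_ind (by simp [hn])
  have hB : ⇑B = c := coe_basisOfLinearIndependentOfCardEqFinrank _ _
  let M : Matrix (Fin (n + 1)) (Fin (n + 1)) L := Matrix.of fun i j => σ j (c i)
  have hsum : ∀ y : L, ∑ j, σ j y = algebraMap K L (Algebra.trace K L y) := by
    intro y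
    rw [trace_eq_sum_automorphisms, ← Equiv.sum_comp σ]
  have hMdet : M.det = (Matrix.of fun i j : Fin n => σ j.succ (b i)).det := by
    have h1 := Matrix.det_updateCol_sum M 0 (fun _ => 1)
    rw [one_smul] at h1
    rw [← h1, Matrix.det_succ_column_zero, Fin.sum_univ_succ, Finset.sum_eq_zero]
    · simp only [one_smul, Matrix.updateCol_self, M, Matrix.of_apply, hsum, c, Fin.cons_zero, hx]
      simp
      congr 1
    · intro i _
      have : b i ∈ LinearMap.ker (Algebra.trace K L) := by
        rw [← hb_span]; exact Submodule.subset_span ⟨i, rfl⟩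
      rw [LinearMap.mem_ker] at this
      simp [M, hsum, c, this]
  set d := (Matrix.of fun i j : Fin n => σ j.succ (b i)).det with hd
  have hdisc : algebraMap K L (Algebra.discr K c) = d ^ 2 := by
    have h1 : (algebraMap K L).mapMatrix (Algebra.traceMatrix K c) = M * M.transpose := by
      ext i j
      simp [Matrix.mul_apply, M, Algebra.traceMatrix_apply, Algebra.traceForm_apply, ← hsum]
    rw [Algebra.discr_def, RingHom.map_det, h1, Matrix.det_mul, Matrix.det_transpose, hMdet,
      pow_two]
  have hd0 : d ≠ 0 := by
    have := Algebra.discr_not_zero_of_basis K B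
    rw [hB] at this
    intro h0
    rw [h0] at hdisc
    simp at hdisc
    exact this hdisc
  obtain ⟨g, hg⟩ := aux_sign P hP2
  have hgd : g d = - d := by
    let π : Equiv.Perm (Fin (n + 1)) := (σ.trans (Equiv.mulLeft g)).trans σ.symm
    have hπ : Equiv.Perm.sign π = -1 := by
      rw [← hg]
      exact Equiv.Perm.sign_eq_sign_of_equiv _ _ σ (by simp [π])
    have h1 := Matrix.det_permute' π M
    rw [hπ] at h1
    rw [← hMdet]
    have h2 : g M.det = (M.submatrix id π).det := by
      rw [AlgEquiv.map_det]
      congr 1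
      ext i j
      simp [M, π]
    rw [h2, h1]
    simp
  have h2K : (2 : K) ≠ 0 := Ring.two_ne_zero hchar
  have h2L : (2 : L) ≠ 0 := by
    rw [← map_ofNat (algebraMap K L) 2]
    exact (map_ne_zero (algebraMap K L)).2 h2K
  have hdK : d ∉ (algebraMap K L).range := by
    rintro ⟨y, hy⟩
    rw [← hy, AlgEquiv.commutes, hy] at hgd
    have : 2 * d = 0 := by linear_combination hgd
    exact hd0 ((mul_eq_zero.1 this).resolve_left h2L)
  have hint : IsIntegral K d := Algebra.IsIntegral.isIntegral d
  have hfin : Module.finrank K (IntermediateField.adjoin K {d}) = 2 := by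
    rw [IntermediateField.adjoin.finrank hint]
    have hle : (minpoly K d).natDegree ≤ 2 := by
      have := Polynomial.natDegree_le_of_dvd
        (minpoly.dvd K d (p := Polynomial.X ^ 2 - Polynomial.C (Algebra.discr K c))
          (by simp [hdisc])) (Polynomial.X_pow_sub_C_ne_zero two_pos _)
      rwa [Polynomial.natDegree_X_pow_sub_C] at this
    have h0 := minpoly.natDegree_pos hint
    have h1 : (minpoly K d).natDegree ≠ 1 := fun h => hdK (minpoly.natDegree_eq_one_iff.1 h)
    omega
  refine ⟨1, d, by simp, ⟨_, hdisc⟩, hfin, fun F hF => ?_⟩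
  rw [← IsGalois.fixedField_fixingSubgroup F,
    ← IsGalois.fixedField_fixingSubgroup (IntermediateField.adjoin K {d})]
  congr 1
  apply aux_index_two_le P
  · rw [← IntermediateField.finrank_eq_fixingSubgroup_index, hF]
  · rw [← IntermediateField.finrank_eq_fixingSubgroup_index, hfin]
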